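/- arXiv:1310.4035 — 4 statements merged into one kernel-verified Lean document; each statement's English description precedes it below -/
import Mathlib

section
/- Let 𝒟 be a class of compact Hausdorff spaces such that: (a) every closed subspace of a member of 𝒟 belongs to 𝒟; (b) every Hausdorff continuous image (equivalently, Hausdorff quotient) of a member of 𝒟 belongs to 𝒟; and (c) every member of 𝒟 whose topology is the order topology of some linear order on it is metrizable. Then every member of 𝒟 has the Bishop property (B). -/
open Set Topology Filter

/-- `f ≺ g`: `f ≠ g` and `f` agrees with `g` on the support of `f` (the closure of
the set where `f` is nonzero). -/
def Prec {K : Type*} [TopologicalSpace K] (f g : C(K, ℝ)) : Prop :=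
  f ≠ g ∧ ∀ t ∈ closure {t | f t ≠ 0}, f t = g t

/-- `f ≺_δ g`: `f ≺ g` and `‖f - g‖ ≥ δ`. -/
def PrecDelta {K : Type*} [TopologicalSpace K] [CompactSpace K] (δ : ℝ) (f g : C(K, ℝ)) : Prop :=
  Prec f g ∧ δ ≤ ‖f - g‖

/-- `F` is a `δ`-`≺`-chain. -/
def IsPrecChain {K : Type*} [TopologicalSpace K] [CompactSpace K] (δ : ℝ)
    (F : Set C(K, ℝ)) : Prop :=
  ∀ f ∈ F, ∀ g ∈ F, f ≠ g → PrecDelta δ f g ∨ PrecDelta δ g f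

/-- A compact Hausdorff space has the Bishop property (B) if for every `δ > 0`
every `δ`-`≺`-chain in `C(K)` is countable. -/
def HasBishop (K : Type*) [TopologicalSpace K] [CompactSpace K] [T2Space K] : Prop :=
  ∀ δ : ℝ, 0 < δ → ∀ F : Set C(K, ℝ), IsPrecChain δ F → F.Countable

/-!
Let `F` be a `δ`-`≺`-chain. On the closed set of points at which every `f ∈ F` satisfies `f t = 0`
or `δ ≤ |f t|`, the sets `{f ≠ 0}` are clopen, and they are nested because `f ≺ g` implies
`{f ≠ 0} ⊆ {g ≠ 0}`. They are also pairwise distinct: if `f ≺_δ g`, then `f t = 0` and `δ ≤ |g t|`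
for some `t`, and `t` is in the closed set because every member of `F` that does not vanish at `t`
agrees with `g` there. Recording for each point which sets of such a chain contain it maps the
closed set onto a compact space of traces, linearly ordered by inclusion and carrying the order
topology. If the space of traces is metrizable, it has only countably many clopen sets, and each
`{f ≠ 0}` is the preimage of one of them.
-/

theorem orderTopology_of_compactSpace {X : Type*} [TopologicalSpace X] [CompactSpace X]
    [LinearOrder X] [OrderClosedTopology X] : OrderTopology X := by
  have hle : ‹TopologicalSpace X› ≤ Preorder.topology X := by
    refine le_generateFrom ?_
    rintro _ ⟨a, rfl | rfl⟩
    exacts [isOpen_Ioi, isOpen_Iio]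
  have ht2 : @T2Space X (Preorder.topology X) :=
    let := Preorder.topology X
    have : OrderTopology X := ⟨rfl⟩
    inferInstance
  -- The identity is a continuous bijection from a compact space to a Hausdorff one.
  have hclosedMap : @IsClosedMap X X _ (Preorder.topology X) id :=
    @Continuous.isClosedMap X X _ (Preorder.topology X) _ ht2 id (continuous_id_of_le hle)
  refine ⟨le_antisymm hle fun s hs => ?_⟩
  have h := hclosedMap sᶜ hs.isClosed_compl
  rw [image_id] at h
  exact (@isClosed_compl_iff X (Preorder.topology X) s).1 h

theorem orderTopology_linearOrder_of_isChain {α : Type*} [TopologicalSpace α] [PartialOrder α]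
    [DecidableLE α] [OrderClosedTopology α] {S : Set α} [CompactSpace S]
    (hS : IsChain (· ≤ ·) S) : @OrderTopology S _ hS.linearOrder.toPreorder :=
  let := hS.linearOrder
  have : OrderClosedTopology S := inferInstanceAs (OrderClosedTopology {x // x ∈ S})
  orderTopology_of_compactSpace

section ClopenChain

open TopologicalSpace

variable {X : Type*} {𝒰 : Set (Set X)} {x y : X}

/-- The trace of a point `x` on a family `𝒰` of sets: the subfamily of those members of `𝒰` that
contain `x`. It is encoded as a function to `Bool`, so that traces carry the pointwise order and the
product topology. -/
noncomputable def familyTrace (𝒰 : Set (Set X)) (x : X) (U : 𝒰) : Bool :=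
  (U : Set X).boolIndicator x

theorem familyTrace_eq_true {U : 𝒰} : familyTrace 𝒰 x U = true ↔ x ∈ (U : Set X) :=
  ((U : Set X).mem_iff_boolIndicator x).symm

theorem familyTrace_le_familyTrace :
    familyTrace 𝒰 x ≤ familyTrace 𝒰 y ↔ ∀ U ∈ 𝒰, x ∈ U → y ∈ U := by
  simp only [Pi.le_def, Subtype.forall, Bool.le_iff_imp, familyTrace_eq_true]

theorem isChain_range_familyTrace (h𝒰 : IsChain (· ⊆ ·) 𝒰) :
    IsChain (· ≤ ·) (range (familyTrace 𝒰)) := by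
  rintro _ ⟨x, rfl⟩ _ ⟨y, rfl⟩ -
  by_contra! h
  simp only [familyTrace_le_familyTrace, not_forall] at h
  obtain ⟨⟨U, hU, hxU, hyU⟩, V, hV, hyV, hxV⟩ := h
  rcases h𝒰.total hU hV with hUV | hVU
  · exact hxV (hUV hxU)
  · exact hyU (hVU hyV)

theorem continuous_familyTrace [TopologicalSpace X] (h𝒰 : ∀ U ∈ 𝒰, IsClopen U) :
    Continuous (familyTrace 𝒰) :=
  continuous_pi fun U => (continuous_boolIndicator_iff_isClopen (U : Set X)).2 (h𝒰 U U.2)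

theorem countable_of_forall_exists_clopens_preimage {Y : Type*} [TopologicalSpace Y]
    [CompactSpace Y] [TotallyDisconnectedSpace Y] [MetrizableSpace Y] {π : X → Y}
    (h𝒰 : ∀ U ∈ 𝒰, ∃ V : Clopens Y, π ⁻¹' V = U) : 𝒰.Countable :=
  have : Countable (Clopens Y) := Clopens.countable_iff_secondCountable.2 inferInstance
  (countable_range fun V : Clopens Y => π ⁻¹' V).mono h𝒰

theorem countable_of_isChain_of_isClopen {X : Type u} [TopologicalSpace X] [CompactSpace X]
    (hmetrizable : ∀ (Y : Type u) [TopologicalSpace Y] [CompactSpace Y] [LinearOrder Y]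
      [OrderTopology Y] [TotallyDisconnectedSpace Y] (π : X → Y), Continuous π →
        Function.Surjective π → MetrizableSpace Y)
    {𝒰 : Set (Set X)} (hclopen : ∀ U ∈ 𝒰, IsClopen U) (hchain : IsChain (· ⊆ ·) 𝒰) :
    𝒰.Countable := by
  classical
  have hcont := continuous_familyTrace hclopen
  have : CompactSpace (range (familyTrace 𝒰)) :=
    isCompact_iff_compactSpace.1 (isCompact_range hcont)
  let := (isChain_range_familyTrace hchain).linearOrder
  have : OrderClosedTopology Bool := ⟨isClosed_discrete _⟩
  have : OrderTopology (range (familyTrace 𝒰)) :=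
    orderTopology_linearOrder_of_isChain (isChain_range_familyTrace hchain)
  have := hmetrizable _ (rangeFactorization (familyTrace 𝒰)) hcont.rangeFactorization
    rangeFactorization_surjective
  refine countable_of_forall_exists_clopens_preimage (π := rangeFactorization (familyTrace 𝒰))
    fun U hU => ⟨⟨{y | y.1 ⟨U, hU⟩ = true}, ?_⟩, ?_⟩
  · exact (isClopen_discrete {true}).preimage
      ((continuous_apply (⟨U, hU⟩ : 𝒰)).comp continuous_subtype_val)
  · ext x
    exact familyTrace_eq_true

end ClopenChain

theorem Prec.apply_eq {K : Type*} [TopologicalSpace K] {f g : C(K, ℝ)} (h : Prec f g) {t : K}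
    (ht : f t ≠ 0) : f t = g t :=
  h.2 t (subset_closure ht)

theorem PrecDelta.exists_eq_zero_le_abs {K : Type*} [TopologicalSpace K] [CompactSpace K] {δ : ℝ}
    (hδ : 0 < δ) {f g : C(K, ℝ)} (h : PrecDelta δ f g) : ∃ t, f t = 0 ∧ δ ≤ |g t| := by
  obtain ⟨t, ht⟩ : ∃ t, δ ≤ |f t - g t| := by
    by_contra! hlt
    exact ((ContinuousMap.norm_lt_iff (f - g) hδ).2 hlt).not_ge h.2
  have hft : f t = 0 := by
    by_contra hne
    rw [h.1.apply_eq hne, sub_self, abs_zero] at ht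
    exact hδ.not_ge ht
  exact ⟨t, hft, by rwa [hft, zero_sub, abs_neg] at ht⟩

section GapSet

/-- The points at which each function in `F` either vanishes or has absolute value at least `δ`. It
is the closed subspace on which the members of a `δ`-`≺`-chain `F` are compared. -/
def gapSet {K : Type*} [TopologicalSpace K] (δ : ℝ) (F : Set C(K, ℝ)) : Set K :=
  {t | ∀ f ∈ F, f t = 0 ∨ δ ≤ |f t|}

/-- The set of nonzeros of `f`, as a subset of `gapSet δ F`; for `f ∈ F` it is clopen. Unlike
`Function.support f` it lives in the subspace. -/
def gapSupport {K : Type*} [TopologicalSpace K] (δ : ℝ) (F : Set C(K, ℝ)) (f : C(K, ℝ)) :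
    Set (gapSet δ F) :=
  {t | f t ≠ 0}

variable {K : Type*} [TopologicalSpace K] {δ : ℝ} {F : Set C(K, ℝ)} {f g : C(K, ℝ)}

theorem isClosed_gapSet (δ : ℝ) (F : Set C(K, ℝ)) : IsClosed (gapSet δ F) := by
  simp only [gapSet, ofPred_forall]
  exact isClosed_iInter fun f => isClosed_iInter fun _ =>
    (isClosed_eq f.continuous continuous_const).union
      (isClosed_le continuous_const f.continuous.abs)

theorem isClopen_gapSupport (hδ : 0 < δ) (hf : f ∈ F) : IsClopen (gapSupport δ F f) := by
  have hcont : Continuous fun t : gapSet δ F => f t := f.continuous.comp continuous_subtype_val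
  have heq : gapSupport δ F f = {t : gapSet δ F | δ ≤ |f t|} := by
    ext t
    exact ⟨(t.2 f hf).resolve_left, fun h => abs_pos.1 (hδ.trans_le h)⟩
  refine ⟨?_, isOpen_ne_fun hcont continuous_const⟩
  rw [heq]
  exact isClosed_le continuous_const hcont.abs

theorem Prec.gapSupport_subset (h : Prec f g) : gapSupport δ F f ⊆ gapSupport δ F g :=
  fun _ hft hgt => hft ((h.apply_eq hft).trans hgt)

variable [CompactSpace K]

theorem IsPrecChain.apply_eq (hF : IsPrecChain δ F) (hf : f ∈ F) (hg : g ∈ F) {t : K}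
    (hft : f t ≠ 0) (hgt : g t ≠ 0) : f t = g t := by
  rcases eq_or_ne f g with rfl | hne
  · rfl
  · rcases hF f hf g hg hne with h | h
    · exact h.1.apply_eq hft
    · exact (h.1.apply_eq hgt).symm

theorem IsPrecChain.mem_gapSet (hF : IsPrecChain δ F) (hδ : 0 < δ) (hg : g ∈ F) {t : K}
    (ht : δ ≤ |g t|) : t ∈ gapSet δ F := fun f hf =>
  or_iff_not_imp_left.2 fun hft => by
    rwa [hF.apply_eq hf hg hft (abs_pos.1 (hδ.trans_le ht))]

theorem IsPrecChain.isChain_image_gapSupport (hF : IsPrecChain δ F) :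
    IsChain (· ⊆ ·) (gapSupport δ F '' F) := by
  rintro _ ⟨f, hf, rfl⟩ _ ⟨g, hg, rfl⟩ hne
  rcases hF f hf g hg fun h => hne (congrArg _ h) with h | h
  · exact .inl h.1.gapSupport_subset
  · exact .inr h.1.gapSupport_subset

theorem IsPrecChain.gapSupport_ne (hF : IsPrecChain δ F) (hδ : 0 < δ) (hg : g ∈ F)
    (hfg : PrecDelta δ f g) : gapSupport δ F f ≠ gapSupport δ F g := by
  obtain ⟨t, hft, hgt⟩ := hfg.exists_eq_zero_le_abs hδ
  have htg : ⟨t, hF.mem_gapSet hδ hg hgt⟩ ∈ gapSupport δ F g := abs_pos.1 (hδ.trans_le hgt)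
  exact fun heq => (heq ▸ htg : _ ∈ gapSupport δ F f) hft

theorem IsPrecChain.injOn_gapSupport (hF : IsPrecChain δ F) (hδ : 0 < δ) :
    InjOn (gapSupport δ F) F := by
  intro f hf g hg heq
  by_contra hfg
  rcases hF f hf g hg hfg with h | h
  · exact hF.gapSupport_ne hδ hg h heq
  · exact hF.gapSupport_ne hδ hf h heq.symm

end GapSet

theorem stmt0_general (K : Type u) [TopologicalSpace K] [CompactSpace K] [T2Space K]
    (hmetrizable : ∀ C : Set K, IsClosed C → ∀ (X : Type u) [TopologicalSpace X] [CompactSpace X]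
      [LinearOrder X] [OrderTopology X] [TotallyDisconnectedSpace X] (π : C → X), Continuous π →
        Function.Surjective π → TopologicalSpace.MetrizableSpace X) :
    HasBishop K := by
  intro δ hδ F hF
  have hclosed := isClosed_gapSet δ F
  have : CompactSpace (gapSet δ F) := isCompact_iff_compactSpace.1 hclosed.isCompact
  refine countable_of_injective_of_countable_image (hF.injOn_gapSupport hδ) ?_
  refine countable_of_isChain_of_isClopen (hmetrizable _ hclosed) ?_ hF.isChain_image_gapSupport
  rintro _ ⟨f, hf, rfl⟩
  exact isClopen_gapSupport hδ hf

/-- **Theorem 1.5.** Let `D` be a class of compact Hausdorff spaces that is preserved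
when taking closed subspaces and Hausdorff continuous images (quotients), and which
contains no non-metrizable linearly ordered space (i.e. every member whose topology is
the order topology of some linear order on it is metrizable). Then every member of `D`
has the Bishop property (B). -/
theorem stmt0 {D : (X : Type u) → [TopologicalSpace X] → Prop}
    (hclosed : ∀ (X : Type u) [TopologicalSpace X] [CompactSpace X] [T2Space X],
      D X → ∀ C : Set X, IsClosed C → D C)
    (himage : ∀ (X Y : Type u) [TopologicalSpace X] [CompactSpace X] [T2Space X]
      [TopologicalSpace Y] [CompactSpace Y] [T2Space Y],
      D X → (∃ π : X → Y, Continuous π ∧ Function.Surjective π) → D Y)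
    (horder : ∀ (X : Type u) [TopologicalSpace X] [CompactSpace X] [T2Space X],
      D X → (∃ l : LinearOrder X, @OrderTopology X ‹TopologicalSpace X› l.toPreorder) →
        TopologicalSpace.MetrizableSpace X)
    (K : Type u) [TopologicalSpace K] [CompactSpace K] [T2Space K] (hK : D K) :
    HasBishop K := by
  refine stmt0_general K fun C hC X _ _ _ _ _ π hπ hsurj => ?_
  have : CompactSpace C := isCompact_iff_compactSpace.1 hC.isCompact
  exact horder X (himage C X (hclosed K hK C hC) ⟨π, hπ, hsurj⟩) ⟨‹_›, ‹_›⟩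
end

section
/- Let K be a compact Hausdorff space, δ > 0, and F a nonempty δ-≺-chain in C(K). If I is an initial segment of F with ∅ ≠ I ⊊ F, then the set W_I is nonempty. -/
open Set Topology Filter

/-- `I` is an initial segment of the chain `F`. -/
def IsInitialSegment {K : Type*} [TopologicalSpace K] (F I : Set C(K, ℝ)) : Prop :=
  I ⊆ F ∧ ∀ f ∈ F, ∀ g ∈ I, Prec f g → f ∈ I

/-- The set `W_I = ⋂_{f ∈ I} f⁻¹({0}) ∩ ⋂_{g ∈ F∖I} g⁻¹({x : |x| ≥ δ})`. -/
def W {K : Type*} [TopologicalSpace K] (δ : ℝ) (F I : Set C(K, ℝ)) : Set K :=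
  (⋂ f ∈ I, (f : C(K, ℝ)) ⁻¹' {0}) ∩ ⋂ g ∈ F \ I, (g : C(K, ℝ)) ⁻¹' {x : ℝ | δ ≤ |x|}

/-!
If `f ≺ g`, then `g = f` wherever `f ≠ 0`, so along `≺` the zero sets `f⁻¹({0})` decrease while the
sets `f⁻¹(D)`, `D = {x | δ ≤ |x|}`, increase. If moreover `‖f - g‖ ≥ δ`, then `f` vanishes at any
point where `|f - g| ≥ δ`, so `f⁻¹({0})` meets `g⁻¹(D)`. Every `f ∈ I` and `g ∈ F \ I` satisfy
`f ≺_δ g`, hence the sets `f⁻¹({0}) ∩ g⁻¹(D)` for such `f`, `g` are nonempty, closed and downward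
directed, and compactness provides a point of their intersection `W_I`.
-/

theorem nonempty_iInter_inter_iInter_of_directed {X ι κ : Type*} [TopologicalSpace X]
    [Nonempty ι] [Nonempty κ] {A : ι → Set X} {B : κ → Set X}
    (hA : Directed (· ⊇ ·) A) (hB : Directed (· ⊇ ·) B)
    (hA_compact : ∀ i, IsCompact (A i)) (hA_closed : ∀ i, IsClosed (A i))
    (hB_closed : ∀ j, IsClosed (B j)) (hAB : ∀ i j, (A i ∩ B j).Nonempty) :
    ((⋂ i, A i) ∩ ⋂ j, B j).Nonempty := by
  have hdir : Directed (· ⊇ ·) fun p : ι × κ => A p.1 ∩ B p.2 := by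
    rintro ⟨i, j⟩ ⟨i', j'⟩
    obtain ⟨k, hki, hki'⟩ := hA i i'
    obtain ⟨l, hlj, hlj'⟩ := hB j j'
    exact ⟨(k, l), inter_subset_inter hki hlj, inter_subset_inter hki' hlj'⟩
  obtain ⟨t, ht⟩ := IsCompact.nonempty_iInter_of_directed_nonempty_isCompact_isClosed _ hdir
    (fun p => hAB p.1 p.2) (fun p => (hA_compact p.1).inter_right (hB_closed p.2))
    fun p => (hA_closed p.1).inter (hB_closed p.2)
  have hmem (i : ι) (j : κ) : t ∈ A i ∩ B j := mem_iInter.1 ht (i, j)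
  exact ⟨t, mem_iInter.2 fun i => (hmem i (Classical.arbitrary κ)).1,
    mem_iInter.2 fun j => (hmem (Classical.arbitrary ι) j).2⟩

section Prec

variable {K : Type*} [TopologicalSpace K] {δ : ℝ} {f g : C(K, ℝ)}

theorem Prec.eq_of_ne_zero (h : Prec f g) {t : K} (ht : f t ≠ 0) : f t = g t :=
  h.2 t (subset_closure ht)

theorem Prec.preimage_zero_subset (h : Prec f g) : g ⁻¹' {0} ⊆ f ⁻¹' {0} := by
  intro t (hgt : g t = 0)
  by_contra hft
  exact hft ((h.eq_of_ne_zero hft).trans hgt)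

theorem Prec.preimage_le_abs_subset (hδ : 0 < δ) (h : Prec f g) :
    f ⁻¹' {x | δ ≤ |x|} ⊆ g ⁻¹' {x | δ ≤ |x|} := by
  intro t (hft : δ ≤ |f t|)
  change δ ≤ |g t|
  rwa [← h.eq_of_ne_zero (abs_pos.1 (hδ.trans_le hft))]

theorem directed_preimage_zero_of_isChain_prec {F : Set C(K, ℝ)} (hF : IsChain Prec F) :
    Directed (· ⊇ ·) fun f : F => (f : C(K, ℝ)) ⁻¹' {0} := by
  have hchain : IsChain ((fun f : C(K, ℝ) => f ⁻¹' {0}) ⁻¹'o (· ⊇ ·)) F :=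
    hF.mono_rel fun _ _ h => h.preimage_zero_subset
  exact hchain.directed

theorem directed_preimage_le_abs_of_isChain_prec (hδ : 0 < δ) {F : Set C(K, ℝ)}
    (hF : IsChain Prec F) :
    Directed (· ⊇ ·) fun f : F => (f : C(K, ℝ)) ⁻¹' {x | δ ≤ |x|} := by
  have hchain : IsChain ((fun f : C(K, ℝ) => f ⁻¹' {x | δ ≤ |x|}) ⁻¹'o (· ⊇ ·)) F :=
    hF.symm.mono_rel fun _ _ h => h.preimage_le_abs_subset hδ
  exact hchain.directed

variable [CompactSpace K]

theorem PrecDelta.preimage_zero_inter_preimage_le_abs_nonempty (hδ : 0 < δ)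
    (h : PrecDelta δ f g) : (f ⁻¹' {0} ∩ g ⁻¹' {x | δ ≤ |x|}).Nonempty := by
  obtain ⟨t, ht⟩ : ∃ t, δ ≤ |f t - g t| := by
    by_contra! hlt
    exact h.2.not_gt ((ContinuousMap.norm_lt_iff _ hδ).2 hlt)
  have hft : f t = 0 := by
    by_contra hne
    rw [h.1.eq_of_ne_zero hne, sub_self, abs_zero] at ht
    exact hδ.not_ge ht
  rw [hft, zero_sub, abs_neg] at ht
  exact ⟨t, hft, ht⟩

end Prec

section IsPrecChain

variable {K : Type*} [TopologicalSpace K] [CompactSpace K] {δ : ℝ} {F I : Set C(K, ℝ)}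

theorem IsPrecChain.isChain (hF : IsPrecChain δ F) : IsChain Prec F :=
  fun f hf g hg hne => (hF f hf g hg hne).imp And.left And.left

theorem IsInitialSegment.precDelta_of_mem_of_mem_sdiff (hI : IsInitialSegment F I)
    (hF : IsPrecChain δ F) {f g : C(K, ℝ)} (hf : f ∈ I) (hg : g ∈ F \ I) : PrecDelta δ f g := by
  have hne : f ≠ g := ne_of_mem_of_not_mem hf hg.2
  exact (hF f (hI.1 hf) g hg.1 hne).resolve_right fun h => hg.2 (hI.2 g hg.1 f hf h.1)

theorem stmt1_general (hδ : 0 < δ) (hF : IsPrecChain δ F) (hI : IsInitialSegment F I)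
    (hIne : I.Nonempty) (hIF : I ⊂ F) : (W δ F I).Nonempty := by
  have : Nonempty I := hIne.to_subtype
  have : Nonempty ↥(F \ I) := (nonempty_of_ssubset hIF).to_subtype
  have hzero (f : C(K, ℝ)) : IsClosed (f ⁻¹' {0}) := isClosed_singleton.preimage f.continuous
  have hlarge (g : C(K, ℝ)) : IsClosed (g ⁻¹' {x | δ ≤ |x|}) :=
    (isClosed_le continuous_const continuous_abs).preimage g.continuous
  rw [W, biInter_eq_iInter, biInter_eq_iInter]
  exact nonempty_iInter_inter_iInter_of_directed
    (directed_preimage_zero_of_isChain_prec (hF.isChain.mono hI.1))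
    (directed_preimage_le_abs_of_isChain_prec hδ (hF.isChain.mono sdiff_subset))
    (fun f => (hzero f).isCompact) (fun f => hzero f) (fun g => hlarge g)
    fun f g => (hI.precDelta_of_mem_of_mem_sdiff hF f.2 g.2)
      |>.preimage_zero_inter_preimage_le_abs_nonempty hδ

end IsPrecChain

/-- **Proposition 2.1 (i).** If `I` is an initial segment of a nonempty `δ`-`≺`-chain `F`
with `∅ ≠ I ⊊ F`, then `W_I` is nonempty. -/
theorem stmt1 {K : Type*} [TopologicalSpace K] [CompactSpace K] [T2Space K]
    (δ : ℝ) (hδ : 0 < δ) (F : Set C(K, ℝ)) (hFne : F.Nonempty) (hF : IsPrecChain δ F)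
    (I : Set C(K, ℝ)) (hI : IsInitialSegment F I) (hIne : I.Nonempty) (hIF : I ⊂ F) :
    (W δ F I).Nonempty :=
  stmt1_general hδ hF hI hIne hIF
end

section
/- Neither the Stone–Čech compactification βℝ of the real line nor the remainder βℝ ∖ ℝ (which is a compact Hausdorff space, since ℝ is locally compact) has the Bishop property (B). -/
open Set Topology Filter

/-!
Let `f` map `X` continuously into a metric space, with a range that is not totally bounded. The
range then contains an infinite uniformly separated set `S`, and an enumeration of points of `S` by
`ℚ` turns the Dedekind cuts into a chain `(A r)`, `r ∈ ℝ`, of subsets of `S` with infinite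
differences. For a small radius, bumps around distinct points of `S` do not meet, so the thickened
indicators of the `A r` increase for `≺`. Composing them with `f` and extending to `βX` gives
functions that differ by `1` on `f ⁻¹' (A s \ A r)` for `r < s`. As `A s \ A r` is infinite and
separated, this set is not relatively compact in `X`, so it accumulates at a point of `βX ∖ X`,
where the extensions still differ by `1`.
-/

open Metric
open scoped ENNReal NNReal BoundedContinuousFunction

section Chains

variable {K : Type*} [TopologicalSpace K] [CompactSpace K]

lemma precDelta_of_forall_eq_zero_or_eq {f g : C(K, ℝ)} {δ : ℝ} (hδ : 0 < δ)
    (hfg : ∀ t, f t = 0 ∨ f t = g t) {t : K} (ht : δ ≤ |f t - g t|) : PrecDelta δ f g := by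
  have hne : f ≠ g := by
    rintro rfl
    exact hδ.not_ge (by simpa using ht)
  have hclosed : IsClosed {u | f u = g u} := isClosed_eq f.continuous g.continuous
  have hsupp : closure {u | f u ≠ 0} ⊆ {u | f u = g u} :=
    closure_minimal (fun u hu => (hfg u).resolve_left hu) hclosed
  exact ⟨⟨hne, hsupp⟩, ht.trans ((f - g).norm_coe_le_norm t)⟩

lemma not_hasBishop_of_forall_lt_precDelta [T2Space K] {ι : Type*} [LinearOrder ι] [Uncountable ι]
    {F : ι → C(K, ℝ)} {δ : ℝ} (hδ : 0 < δ) (hF : ∀ i j, i < j → PrecDelta δ (F i) (F j)) :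
    ¬ HasBishop K := by
  have hinj : Function.Injective F := .of_lt_imp_ne fun i j hij => (hF i j hij).1.1
  have hchain : IsPrecChain δ (range F) := by
    rintro _ ⟨i, rfl⟩ _ ⟨j, rfl⟩ hne
    exact (ne_of_apply_ne F hne).lt_or_gt.imp (hF i j) (hF j i)
  intro hK
  have hcount : (F ⁻¹' range F).Countable := (hK δ hδ _ hchain).preimage_of_injOn hinj.injOn
  rw [preimage_range] at hcount
  exact not_countable_univ hcount

end Chains

lemma exists_monotone_real_infinite_sdiff {α : Type*} {S : Set α} (hS : S.Infinite) :
    ∃ A : ℝ → Set α, Monotone A ∧ (∀ r, A r ⊆ S) ∧ ∀ r s, r < s → (A s \ A r).Infinite := by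
  let e : ℚ ↪ S := (Denumerable.eqv ℚ).toEmbedding.trans hS.natEmbedding
  let x : ℚ → α := fun q => e q
  have hx : Function.Injective x := Subtype.val_injective.comp e.injective
  refine ⟨fun r => x '' {q | (q : ℝ) < r}, ?_, ?_, ?_⟩
  · exact fun r s hrs => image_mono fun q hq => hq.trans_le hrs
  · exact fun r => image_subset_iff.2 fun q _ => (e q).2
  · intro r s hrs
    obtain ⟨a, hra, has⟩ := exists_rat_btwn hrs
    obtain ⟨b, hab, hbs⟩ := exists_rat_btwn has
    have hsub : Ioo a b ⊆ {q : ℚ | (q : ℝ) < s} \ {q : ℚ | (q : ℝ) < r} := fun q hq =>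
      ⟨(Rat.cast_lt.2 hq.2).trans hbs, (hra.trans (Rat.cast_lt.2 hq.1)).not_gt⟩
    rw [← image_sdiff hx]
    exact ((Ioo_infinite (Rat.cast_lt.1 hab)).mono hsub).image hx.injOn

section SeparatedSets

variable {Y : Type*} [PseudoEMetricSpace Y] {A B : Set Y} {δ : ℝ}

lemma exists_maximal_isSeparated (ε : ℝ≥0∞) (A : Set Y) :
    ∃ S, Maximal (fun S => S ⊆ A ∧ IsSeparated ε S) S := by
  refine zorn_subset {S | S ⊆ A ∧ IsSeparated ε S} fun c hc hchain => ?_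
  have hsep : IsSeparated ε (⋃₀ c) :=
    (pairwise_sUnion hchain.directedOn).2 fun S hS => (hc hS).2
  exact ⟨⋃₀ c, ⟨sUnion_subset fun S hS => (hc hS).1, hsep⟩, fun S => subset_sUnion_of_mem⟩

lemma exists_infinite_isSeparated_of_not_totallyBounded (hA : ¬ TotallyBounded A) :
    ∃ ε : ℝ≥0, 0 < ε ∧ ∃ S ⊆ A, S.Infinite ∧ IsSeparated ε S := by
  contrapose! hA
  refine EMetric.totallyBounded_iff.2 fun η hη => ?_
  obtain ⟨ε, hε, hεη⟩ := ENNReal.lt_iff_exists_nnreal_btwn.1 hη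
  obtain ⟨S, hS⟩ := exists_maximal_isSeparated ε A
  have hfinite : S.Finite := by
    by_contra hinf
    exact hA ε (ENNReal.coe_pos.1 hε) S hS.prop.1 hinf hS.prop.2
  have hcover : A ⊆ ⋃ y ∈ S, closedEBall y ε :=
    isCover_iff_subset_iUnion_closedEBall.1 (.of_maximal_isSeparated hS)
  exact ⟨S, hfinite, hcover.trans (iUnion₂_mono fun y _ z hz => hz.trans_lt hεη)⟩

lemma finite_of_isSeparated_of_totallyBounded {ε : ℝ≥0} (hε : 0 < ε) (hA : IsSeparated ε A)
    (hA' : TotallyBounded A) : A.Finite := by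
  obtain ⟨N, -, hNfinite, hN⟩ := exists_finite_isCover_of_totallyBounded (half_pos hε).ne' hA'
  have hA₂ : IsSeparated ↑(2 * (ε / 2)) A := by rwa [mul_div_cancel₀ ε two_ne_zero]
  refine encard_lt_top_iff.1 (lt_of_le_of_lt ?_ hNfinite.encard_lt_top)
  calc
    A.encard ≤ packingNumber (2 * (ε / 2)) A := hA₂.encard_le_packingNumber subset_rfl
    _ ≤ externalCoveringNumber (ε / 2) A := packingNumber_two_mul_le_externalCoveringNumber _ _
    _ ≤ N.encard := hN.externalCoveringNumber_le_encard

lemma notMem_thickening_of_isSeparated (hB : IsSeparated (.ofReal δ) B) (hAB : A ⊆ B) {y : Y}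
    (hy : y ∈ B \ A) : y ∉ thickening δ A := by
  rw [mem_thickening_iff_exists_edist_lt]
  rintro ⟨a, ha, hya⟩
  exact hya.not_gt (hB hy.1 (hAB ha) fun h => hy.2 (h ▸ ha))

lemma infEDist_eq_of_isSeparated_of_mem_thickening (hB : IsSeparated (2 * .ofReal δ) B)
    (hAB : A ⊆ B) {y : Y} (hy : y ∈ thickening δ A) : infEDist y A = infEDist y B := by
  obtain ⟨a, ha, hya⟩ := (mem_thickening_iff_exists_edist_lt A y).1 hy
  refine (le_infEDist.2 fun b hb => ?_).antisymm (infEDist_anti hAB)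
  rcases lt_or_ge (edist y b) (.ofReal δ) with hyb | hyb
  · have hab : edist a b ≤ 2 * .ofReal δ :=
      calc
        edist a b ≤ edist y a + edist y b := edist_triangle_left a b y
        _ ≤ .ofReal δ + .ofReal δ := add_le_add hya.le hyb.le
        _ = 2 * .ofReal δ := (two_mul _).symm
    obtain rfl : a = b := hB.eq (hAB ha) hb hab.not_gt
    exact infEDist_le_edist_of_mem ha
  · exact (infEDist_le_edist_of_mem ha).trans (hya.le.trans hyb)

lemma thickenedIndicator_eq_zero_or_eq_of_isSeparated (hδ : 0 < δ)
    (hB : IsSeparated (2 * .ofReal δ) B) (hAB : A ⊆ B) (y : Y) :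
    thickenedIndicator hδ A y = 0 ∨ thickenedIndicator hδ A y = thickenedIndicator hδ B y := by
  by_cases hy : y ∈ thickening δ A
  · right
    simp only [thickenedIndicator_apply, thickenedIndicatorAux,
      infEDist_eq_of_isSeparated_of_mem_thickening hB hAB hy]
  · exact .inl (thickenedIndicator_zero hδ A hy)

end SeparatedSets

section StoneCech

variable {X : Type*} [TopologicalSpace X]

lemma isOpen_range_of_isDenseInducing [WeaklyLocallyCompactSpace X] {Z : Type*} [TopologicalSpace Z]
    [T2Space Z] {i : X → Z} (hi : IsDenseInducing i) : IsOpen (range i) := by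
  rw [isOpen_iff_mem_nhds]
  rintro _ ⟨x, rfl⟩
  obtain ⟨C, hC, hx⟩ := exists_compact_mem_nhds x
  have hclosed : IsClosed (i '' C) := (hC.image hi.continuous).isClosed
  exact mem_of_superset (hclosed.closure_eq ▸ hi.closure_image_mem_nhds hx) (image_subset_range i C)

lemma exists_mem_closure_image_stoneCechUnit_notMem_range [CompletelyRegularSpace X] {T : Set X}
    (hT : ¬ IsCompact (closure T)) :
    ∃ p ∈ closure (stoneCechUnit '' T), p ∉ range (stoneCechUnit : X → StoneCech X) := by
  contrapose! hT
  rw [isInducing_stoneCechUnit.closure_eq_preimage_closure_image,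
    isInducing_stoneCechUnit.isCompact_iff, image_preimage_eq_of_subset hT]
  exact isClosed_closure.isCompact

/-- The continuous extension to `βX` of a bounded continuous function into a proper metric space. -/
noncomputable def stoneCechExtendBounded {Z : Type*} [MetricSpace Z] [ProperSpace Z] (g : X →ᵇ Z) :
    C(StoneCech X, Z) :=
  have : CompactSpace (closure (range g)) :=
    isCompact_iff_compactSpace.1 g.isBounded_range.isCompact_closure
  have hg : Continuous fun x => (⟨g x, subset_closure (mem_range_self x)⟩ : closure (range g)) :=
    g.continuous.subtype_mk _
  ⟨fun p => (stoneCechExtend hg p : closure (range g)),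
    continuous_subtype_val.comp (continuous_stoneCechExtend hg)⟩

lemma stoneCechExtendBounded_stoneCechUnit {Z : Type*} [MetricSpace Z] [ProperSpace Z] (g : X →ᵇ Z)
    (x : X) : stoneCechExtendBounded g (stoneCechUnit x) = g x := by
  simp only [stoneCechExtendBounded, ContinuousMap.coe_mk, stoneCechExtend_stoneCechUnit]

variable {Y : Type*} [PseudoEMetricSpace Y] (f : C(X, Y)) {A B : Set Y} {δ : ℝ}

/-- The extension to `βX` of the `δ`-thickened indicator of `A ⊆ Y` composed with `f : X → Y`,
viewed as a real-valued function. -/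
noncomputable def stoneCechThickenedIndicator (hδ : 0 < δ) (A : Set Y) : C(StoneCech X, ℝ) :=
  ContinuousMap.coeNNRealReal.comp
    (stoneCechExtendBounded ((thickenedIndicator hδ A).compContinuous f))

lemma stoneCechThickenedIndicator_stoneCechUnit (hδ : 0 < δ) (x : X) :
    stoneCechThickenedIndicator f hδ A (stoneCechUnit x) = thickenedIndicator hδ A (f x) := by
  simp [stoneCechThickenedIndicator, stoneCechExtendBounded_stoneCechUnit]

lemma stoneCechThickenedIndicator_eq_zero_or_eq_of_isSeparated (hδ : 0 < δ)
    (hB : IsSeparated (2 * .ofReal δ) B) (hAB : A ⊆ B) (p : StoneCech X) :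
    stoneCechThickenedIndicator f hδ A p = 0 ∨
      stoneCechThickenedIndicator f hδ A p = stoneCechThickenedIndicator f hδ B p := by
  have hclosed : IsClosed {p | stoneCechThickenedIndicator f hδ A p = 0 ∨
      stoneCechThickenedIndicator f hδ A p = stoneCechThickenedIndicator f hδ B p} :=
    (isClosed_eq (by fun_prop) continuous_const).union (isClosed_eq (by fun_prop) (by fun_prop))
  refine denseRange_stoneCechUnit.induction_on p hclosed fun x => ?_
  simpa only [stoneCechThickenedIndicator_stoneCechUnit, NNReal.coe_eq_zero, NNReal.coe_inj]
    using thickenedIndicator_eq_zero_or_eq_of_isSeparated hδ hB hAB (f x)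

lemma stoneCechThickenedIndicator_sub_eq_one_of_mem_closure (hδ : 0 < δ)
    (hB : IsSeparated (.ofReal δ) B) (hAB : A ⊆ B) {p : StoneCech X}
    (hp : p ∈ closure (stoneCechUnit '' (f ⁻¹' (B \ A)))) :
    stoneCechThickenedIndicator f hδ B p - stoneCechThickenedIndicator f hδ A p = 1 := by
  have hclosed : IsClosed {p | stoneCechThickenedIndicator f hδ B p -
      stoneCechThickenedIndicator f hδ A p = 1} := isClosed_eq (by fun_prop) continuous_const
  refine closure_minimal (image_subset_iff.2 fun x hx => ?_) hclosed hp
  have hB1 : thickenedIndicator hδ B (f x) = 1 := thickenedIndicator_one hδ B hx.1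
  have hA0 : thickenedIndicator hδ A (f x) = 0 :=
    thickenedIndicator_zero hδ A (notMem_thickening_of_isSeparated hB hAB hx)
  rw [mem_preimage, mem_ofPred_eq, stoneCechThickenedIndicator_stoneCechUnit,
    stoneCechThickenedIndicator_stoneCechUnit, hB1, hA0, NNReal.coe_one, NNReal.coe_zero, sub_zero]

variable {f}

lemma not_isCompact_closure_preimage_of_isSeparated {ε : ℝ≥0} (hε : 0 < ε) (hA : IsSeparated ε A)
    (hA' : A.Infinite) (hAf : A ⊆ range f) : ¬ IsCompact (closure (f ⁻¹' A)) := by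
  intro hcompact
  have hsub : A ⊆ f '' closure (f ⁻¹' A) :=
    (image_preimage_eq_of_subset hAf).superset.trans (image_mono subset_closure)
  exact hA' (finite_of_isSeparated_of_totallyBounded hε hA
    ((hcompact.image f.continuous).totallyBounded.subset hsub))

theorem not_hasBishop_of_compl_range_stoneCechUnit_subset_range [CompletelyRegularSpace X]
    (hf : ¬ TotallyBounded (range f)) {K : Type*} [TopologicalSpace K] [CompactSpace K] [T2Space K]
    (φ : C(K, StoneCech X)) (hφ : (range (stoneCechUnit : X → StoneCech X))ᶜ ⊆ range φ) :
    ¬ HasBishop K := by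
  obtain ⟨ε, hε, S, hSf, hSinf, hS⟩ := exists_infinite_isSeparated_of_not_totallyBounded hf
  obtain ⟨A, hAmono, hAS, hAinf⟩ := exists_monotone_real_infinite_sdiff hSinf
  have hδ : (0 : ℝ) < ε / 2 := by positivity
  have hS₂ : IsSeparated (2 * .ofReal (ε / 2)) S := by
    rwa [← ENNReal.ofReal_ofNat, ← ENNReal.ofReal_mul zero_le_two,
      mul_div_cancel₀ (ε : ℝ) two_ne_zero, ENNReal.ofReal_coe_nnreal]
  have hS₁ : IsSeparated (.ofReal (ε / 2)) S := hS₂.anti (le_mul_of_one_le_left' one_le_two)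
  refine not_hasBishop_of_forall_lt_precDelta one_pos
    (F := fun r => (stoneCechThickenedIndicator f hδ (A r)).comp φ) fun r s hrs => ?_
  have hrsA : A r ⊆ A s := hAmono hrs.le
  have hnoncompact : ¬ IsCompact (closure (f ⁻¹' (A s \ A r))) :=
    not_isCompact_closure_preimage_of_isSeparated hε (hS.subset (sdiff_subset.trans (hAS s)))
      (hAinf r s hrs) (sdiff_subset.trans ((hAS s).trans hSf))
  obtain ⟨p, hp, hpX⟩ := exists_mem_closure_image_stoneCechUnit_notMem_range hnoncompact
  obtain ⟨t, rfl⟩ := hφ hpX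
  refine precDelta_of_forall_eq_zero_or_eq one_pos (t := t) (fun u =>
    stoneCechThickenedIndicator_eq_zero_or_eq_of_isSeparated f hδ (hS₂.subset (hAS s)) hrsA _) ?_
  have hdiff := stoneCechThickenedIndicator_sub_eq_one_of_mem_closure f hδ
    (hS₁.subset (hAS s)) hrsA hp
  rw [abs_sub_comm, ContinuousMap.comp_apply, ContinuousMap.comp_apply, hdiff, abs_one]

end StoneCech

theorem stmt5_general {X Y : Type*} [TopologicalSpace X] [CompletelyRegularSpace X]
    [WeaklyLocallyCompactSpace X] [PseudoEMetricSpace Y] (f : C(X, Y))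
    (hf : ¬ TotallyBounded (range f)) :
    ¬ HasBishop (StoneCech X) ∧
    IsCompact (range (stoneCechUnit : X → StoneCech X))ᶜ ∧
    ∀ _ : CompactSpace ↥(range (stoneCechUnit : X → StoneCech X))ᶜ,
      ¬ HasBishop ↥(range (stoneCechUnit : X → StoneCech X))ᶜ := by
  refine ⟨?_, ?_, fun _ => ?_⟩
  · exact not_hasBishop_of_compl_range_stoneCechUnit_subset_range hf (.id _) (by simp)
  · exact (isOpen_range_of_isDenseInducing isDenseInducing_stoneCechUnit).isClosed_compl.isCompact
  · exact not_hasBishop_of_compl_range_stoneCechUnit_subset_range hf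
      ⟨Subtype.val, continuous_subtype_val⟩ Subtype.range_val.superset

/-- **Example 3.2.** Neither `βℝ` nor the remainder `βℝ ∖ ℝ` (which is compact,
`ℝ` being locally compact) has the Bishop property (B). -/
theorem stmt5 :
    ¬ HasBishop (StoneCech ℝ) ∧
    IsCompact ((Set.range (stoneCechUnit : ℝ → StoneCech ℝ))ᶜ) ∧
    ∀ (h : CompactSpace ↥(Set.range (stoneCechUnit : ℝ → StoneCech ℝ))ᶜ),
      ¬ @HasBishop ↥(Set.range (stoneCechUnit : ℝ → StoneCech ℝ))ᶜ _ h
        inferInstance := by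
  have hℝ : ¬ TotallyBounded (range (ContinuousMap.id ℝ)) := fun h =>
    NoncompactSpace.noncompact_univ (X := ℝ) (by simpa using h.isCompact_of_isClosed (by simp))
  exact stmt5_general (.id ℝ) hℝ
end

section
/- Let K be a compact Hausdorff space, M ⊆ K a closed subset, and δ > 0. Suppose f_n (n ∈ ℕ) and f in C(K) satisfy f_1 ≺ f_2 ≺ f_3 ≺ ⋯ ≺ f (that is, f_n ≺ f_{n+1} for all n and f_n ≺ f for all n), and suppose t_n ∈ M satisfy f_n(t_n) = 0 and |f_{n+1}(t_n)| ≥ δ for all n. Then no accumulation point u ∈ M of the sequence (t_n) has a local base of connected sets relative to M. -/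
open Set Topology Filter

/-- `t ∈ M` has a local base of connected sets relative to `M`: for every set `U`
open in `M` (with its subspace topology) containing `t`, there is a connected set `V`,
open in `M`, with `t ∈ V ⊆ U`. -/
def HasConnBase {K : Type*} [TopologicalSpace K] (M : Set K) (t : K) (ht : t ∈ M) : Prop :=
  ∀ U : Set ↥M, IsOpen U → (⟨t, ht⟩ : ↥M) ∈ U →
    ∃ V : Set ↥M, IsOpen V ∧ IsConnected V ∧ (⟨t, ht⟩ : ↥M) ∈ V ∧ V ⊆ U

/-!
If `f ≺ g`, then `{f ≠ 0}` is relatively clopen in `{g ≠ 0}`, because `f = g` on the closure of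
`{f ≠ 0}`. Hence a preconnected set on which `g` has no zero meets `{f ≠ 0}` only if it is
contained in it. The bound `δ` forces `flim u ≠ 0`, so a connected base at `u` would give a
preconnected neighbourhood of `u` in `M` free of zeros of `flim`. It contains `t n` and `t m` for
some `n < m`, but `f m` vanishes at `t m` and not at `t n`.
-/

namespace Prec

variable {K : Type*} [TopologicalSpace K] {f g : C(K, ℝ)}

theorem eq_of_ne_zero_s6 (h : Prec f g) {x : K} (hx : f x ≠ 0) : f x = g x :=
  h.2 x (subset_closure hx)

theorem support_subset (h : Prec f g) : Function.support f ⊆ Function.support g :=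
  fun _ hx => (h.eq_of_ne_zero_s6 hx).symm.trans_ne hx

theorem subset_support_of_isPreconnected (h : Prec f g) {S : Set K} (hS : IsPreconnected S)
    (hSg : S ⊆ Function.support g) (hSf : (S ∩ Function.support f).Nonempty) :
    S ⊆ Function.support f := by
  have hcover : S ⊆ Function.support f ∪ (closure (Function.support f))ᶜ := by
    intro x hx
    by_cases hxf : x ∈ closure (Function.support f)
    · have hfg : f x = g x := h.2 x hxf
      exact Or.inl (hfg.trans_ne (hSg hx))
    · exact Or.inr hxf
  exact hS.subset_left_of_subset_union f.continuous.isOpen_support isClosed_closure.isOpen_compl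
    (disjoint_compl_right.mono_left subset_closure) hcover hSf

end Prec

theorem HasConnBase.exists_isPreconnected_subset {K : Type*} [TopologicalSpace K] {M : Set K}
    {u : K} {hu : u ∈ M} (h : HasConnBase M u hu) {U : Set K} (hU : IsOpen U) (huU : u ∈ U) :
    ∃ S ∈ 𝓝[M] u, IsPreconnected S ∧ S ⊆ U := by
  obtain ⟨V, hVopen, hVconn, huV, hVU⟩ := h (Subtype.val ⁻¹' U)
    (hU.preimage continuous_subtype_val) huU
  refine ⟨Subtype.val '' V, ?_, ?_, image_subset_iff.2 hVU⟩
  · rw [nhdsWithin_eq_map_subtype_coe hu]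
    exact image_mem_map (hVopen.mem_nhds huV)
  · exact hVconn.isPreconnected.image _ continuous_subtype_val.continuousOn

theorem frequently_mem_of_mapClusterPt_of_mem_nhdsWithin {ι X : Type*} [TopologicalSpace X]
    {l : Filter ι} {t : ι → X} {u : X} {M S : Set X} (h : MapClusterPt u l t)
    (htM : ∀ᶠ i in l, t i ∈ M) (hS : S ∈ 𝓝[M] u) : ∃ᶠ i in l, t i ∈ S :=
  (h.frequently (mem_nhdsWithin_iff_eventually.1 hS)).mp (htM.mono fun _ hi hMS => hMS hi)

theorem stmt6_general {K : Type*} [TopologicalSpace K] (M : Set K) (δ : ℝ) (hδ : 0 < δ)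
    (f : ℕ → C(K, ℝ)) (flim : C(K, ℝ))
    (hsucc : ∀ n, Prec (f n) (f (n + 1))) (htop : ∀ n, Prec (f n) flim)
    (t : ℕ → K) (htM : ∀ n, t n ∈ M)
    (hzero : ∀ n, f n (t n) = 0) (hbig : ∀ n, δ ≤ |f (n + 1) (t n)|)
    (u : K) (hu : u ∈ M) (hacc : MapClusterPt u atTop t) :
    ¬ HasConnBase M u hu := by
  intro hbase
  have hne (n : ℕ) : f (n + 1) (t n) ≠ 0 := abs_pos.1 (hδ.trans_le (hbig n))
  have hlim (n : ℕ) : δ ≤ |flim (t n)| := (htop (n + 1)).eq_of_ne_zero_s6 (hne n) ▸ hbig n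
  have hlim_u : δ ≤ |flim u| := (isClosed_le continuous_const flim.continuous.abs)
    |>.mem_of_mapClusterPt hacc (.of_forall hlim)
  have hmono : Monotone fun n => Function.support (f n) :=
    monotone_nat_of_le_succ fun n => (hsucc n).support_subset
  obtain ⟨S, hSu, hSconn, hSlim⟩ := hbase.exists_isPreconnected_subset
    flim.continuous.isOpen_support (abs_pos.1 (hδ.trans_le hlim_u))
  have hfreq : ∃ᶠ n in atTop, t n ∈ S :=
    frequently_mem_of_mapClusterPt_of_mem_nhdsWithin hacc (.of_forall htM) hSu
  obtain ⟨n, hn⟩ := hfreq.exists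
  obtain ⟨m, hnm, hm⟩ := frequently_atTop.1 hfreq (n + 1)
  have hSm : S ⊆ Function.support (f m) :=
    (htop m).subset_support_of_isPreconnected hSconn hSlim ⟨t n, hn, hmono hnm (hne n)⟩
  exact hSm hm (hzero m)

/-- **Lemma 3.4.** Let `M ⊆ K` be closed and suppose `f₁ ≺ f₂ ≺ ⋯ ≺ f` in `C(K)` and
`tₙ ∈ M` satisfy `fₙ(tₙ) = 0` and `|f_{n+1}(tₙ)| ≥ δ` for all `n`. Then no accumulation
point `u ∈ M` of the sequence `(tₙ)` has a local base of connected sets relative to `M`. -/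
theorem stmt6 {K : Type*} [TopologicalSpace K] [CompactSpace K] [T2Space K]
    (M : Set K) (hM : IsClosed M) (δ : ℝ) (hδ : 0 < δ)
    (f : ℕ → C(K, ℝ)) (flim : C(K, ℝ))
    (hsucc : ∀ n, Prec (f n) (f (n + 1))) (htop : ∀ n, Prec (f n) flim)
    (t : ℕ → K) (htM : ∀ n, t n ∈ M)
    (hzero : ∀ n, f n (t n) = 0) (hbig : ∀ n, δ ≤ |f (n + 1) (t n)|)
    (u : K) (hu : u ∈ M) (hacc : MapClusterPt u atTop t) :
    ¬ HasConnBase M u hu :=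
  stmt6_general M δ hδ f flim hsucc htop t htM hzero hbig u hu hacc
end
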